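/- Let n, ℓ be natural numbers. The map i^G : G_{n,ℓ} → G_{n+1,ℓ} from the Grassmannian of n-planes in ℝ^{n+ℓ} to the Grassmannian of (n+1)-planes in ℝ^{n+ℓ+1}, sending an n-plane a to the (n+1)-plane spanned by a and the (n+ℓ+1)-st unit vector, induces an isomorphism on homotopy groups π_i for 0 ≤ i < n and an epimorphism for i = n. -/

import Mathlib

/-!
STATEMENT 0. The stabilization map `i^G : G_{n,ℓ} → G_{n+1,ℓ}` of Grassmannians,
sending an `n`-plane `a ⊆ ℝ^{n+ℓ}` to the `(n+1)`-plane spanned by `a` and the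
`(n+ℓ+1)`-st unit vector, induces an isomorphism on homotopy groups `π_i` for
`0 ≤ i < n` and an epimorphism for `i = n`.

The Grassmannian `G_{m,ℓ}` is modeled as the space of symmetric idempotent real
`(m+ℓ) × (m+ℓ)` matrices of trace `m` (i.e. orthogonal projections onto
`m`-dimensional subspaces of `ℝ^{m+ℓ}`), with the subspace topology from matrices;
the stabilization map is `P ↦ P ⊕ (1)` (block sum with the `1 × 1` identity acting
on the new last coordinate).
-/

noncomputable section
open scoped Topology
open Matrix

/-- The map induced on generalized loops by a continuous map. -/
def GenLoop.induced {N X Y : Type*} [TopologicalSpace X] [TopologicalSpace Y]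
    (f : C(X, Y)) {x : X} (p : GenLoop N X x) : GenLoop N Y (f x) :=
  ⟨f.comp p.1, fun y hy => by simp [p.2 y hy]⟩

/-- The map induced on homotopy groups by a continuous map. -/
def HomotopyGroup.induced {X Y : Type*} [TopologicalSpace X] [TopologicalSpace Y]
    (N : Type*) (f : C(X, Y)) (x : X) :
    HomotopyGroup N X x → HomotopyGroup N Y (f x) :=
  Quotient.map (GenLoop.induced f)
    (fun _ _ h => h.map fun H => H.compContinuousMap f)

lemma trace_submatrix_equiv' {m n : Type*} [Fintype m] [Fintype n] (e : m ≃ n)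
    (A : Matrix n n ℝ) : (A.submatrix e e).trace = A.trace := by
  simp only [Matrix.trace, Matrix.diag, Matrix.submatrix_apply]
  exact Equiv.sum_comp e fun i => A i i

/-- The Grassmann manifold `G_{n,ℓ}` of `n`-planes in `ℝ^{n+ℓ}`, modeled as the space
of orthogonal projections of rank `n`: symmetric idempotent matrices of trace `n`. -/
def MatGrassmannian (n ℓ : ℕ) : Type :=
  {P : Matrix (Fin (n + ℓ)) (Fin (n + ℓ)) ℝ // Pᵀ = P ∧ P * P = P ∧ P.trace = n}

instance (n ℓ : ℕ) : TopologicalSpace (MatGrassmannian n ℓ) :=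
  inferInstanceAs (TopologicalSpace
    {P : Matrix (Fin (n + ℓ)) (Fin (n + ℓ)) ℝ // Pᵀ = P ∧ P * P = P ∧ P.trace = n})

/-- Reindexing equivalence `Fin (n+ℓ) ⊕ Fin 1 ≃ Fin (n+1+ℓ)` (the extra coordinate
is the last one, corresponding to the unit vector `e_{n+ℓ+1}`). -/
def grassmannReindex (n ℓ : ℕ) : Fin (n + ℓ) ⊕ Fin 1 ≃ Fin (n + 1 + ℓ) :=
  finSumFinEquiv.trans (finCongr (by omega))

/-- The stabilization map `i^G : G_{n,ℓ} → G_{n+1,ℓ}`, sending the projection onto a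
plane `a` to the projection onto `a ⊕ ℝ·e_{n+ℓ+1}`. -/
def grassmannInclusion (n ℓ : ℕ) : C(MatGrassmannian n ℓ, MatGrassmannian (n + 1) ℓ) where
  toFun P :=
    ⟨(Matrix.fromBlocks P.1 0 0 (1 : Matrix (Fin 1) (Fin 1) ℝ)).submatrix
        (grassmannReindex n ℓ).symm (grassmannReindex n ℓ).symm, by
      obtain ⟨P, hs, hi, ht⟩ := P
      refine ⟨?_, ?_, ?_⟩
      · rw [Matrix.transpose_submatrix, Matrix.fromBlocks_transpose]
        simp [hs]
      · rw [Matrix.submatrix_mul_equiv _ _ _ (grassmannReindex n ℓ).symm _,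
          Matrix.fromBlocks_multiply]
        simp [hi]
      · rw [trace_submatrix_equiv']
        simp only [Matrix.trace, Matrix.diag, Fintype.sum_sum_type,
          Matrix.fromBlocks_apply₁₁, Matrix.fromBlocks_apply₂₂]
        have : ∑ i : Fin (n + ℓ), P i i = (n : ℝ) := ht
        rw [this]
        push_cast
        simp⟩
  continuous_toFun := by
    apply Continuous.subtype_mk
    exact (Continuous.matrix_fromBlocks continuous_subtype_val continuous_const
      continuous_const continuous_const).matrix_submatrix _ _


open unitInterval in
/-- A continuous family of idempotents over a compact contractible space is trivial. -/
lemma exists_trivialization {ι K : Type*} [Fintype ι] [DecidableEq ι] [TopologicalSpace K]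
    [CompactSpace K] (c : I × K → K) (hc : Continuous c) (hc1 : ∀ x, c (1, x) = x) (x0 : K)
    (hc0 : ∀ x, c (0, x) = x0) (P : K → Matrix ι ι ℝ) (hP : Continuous P)
    (hPP : ∀ x, P x * P x = P x) :
    ∃ U : K → Matrix ι ι ℝ, Continuous U ∧ (∀ x, (U x).det ≠ 0) ∧
      ∀ x, P x * U x = U x * P x0 := by
  let Good : I → Prop := fun s => ∃ U : K → Matrix ι ι ℝ, Continuous U ∧ (∀ x, (U x).det ≠ 0) ∧
      ∀ x, P (c (s, x)) * U x = U x * P x0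
  let Z : I → I → K → Matrix ι ι ℝ := fun s s' x =>
    P (c (s, x)) * P (c (s', x)) + (1 - P (c (s, x))) * (1 - P (c (s', x)))
  have hZ : Continuous fun q : I × I × K => Z q.1 q.2.1 q.2.2 := by
    simp only [Z]; fun_prop
  have hZ1 : ∀ s x, Z s s x = 1 := by
    intro s x
    simp only [Z, mul_sub, sub_mul, hPP, mul_one, one_mul]
    abel
  have hstep : ∀ s s', (∀ x, (Z s s' x).det ≠ 0) → Good s' → Good s := by
    rintro s s' hd ⟨U, hU, hUd, hPU⟩
    refine ⟨fun x => Z s s' x * U x, ?_, ?_, ?_⟩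
    · have : Continuous fun x => Z s s' x :=
        hZ.comp (continuous_const.prodMk (continuous_const.prodMk continuous_id))
      exact this.mul hU
    · intro x; rw [Matrix.det_mul]; exact mul_ne_zero (hd x) (hUd x)
    · intro x
      have h1 : P (c (s, x)) * Z s s' x = Z s s' x * P (c (s', x)) := by
        simp only [Z, mul_add, add_mul]
        have e1 : P (c (s, x)) * (P (c (s, x)) * P (c (s', x))) =
            P (c (s, x)) * P (c (s', x)) := by rw [← mul_assoc, hPP]
        have e2 : P (c (s, x)) * P (c (s', x)) * P (c (s', x)) =
            P (c (s, x)) * P (c (s', x)) := by rw [mul_assoc, hPP]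
        have e3 : P (c (s, x)) * ((1 - P (c (s, x))) * (1 - P (c (s', x)))) = 0 := by
          rw [← mul_assoc, mul_sub (P (c (s, x))) 1 (P (c (s, x))), hPP]; simp
        have e4 : (1 - P (c (s, x))) * (1 - P (c (s', x))) * P (c (s', x)) = 0 := by
          rw [mul_assoc, sub_mul 1 (P (c (s', x))), hPP]; simp
        rw [e1, e2, e3, e4]
      rw [← mul_assoc, h1, mul_assoc, hPU, mul_assoc]
  have hnear : ∀ s, ∀ᶠ s' in 𝓝 s, (Good s ↔ Good s') := by
    intro s
    have k1 : ∀ᶠ s' in 𝓝 s, ∀ x ∈ (Set.univ : Set K), (Z s s' x).det ≠ 0 := by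
      refine isCompact_univ.eventually_forall_of_forall_eventually fun x _ => ?_
      have : Continuous fun z : I × K => (Z s z.1 z.2).det :=
        (hZ.comp (continuous_const.prodMk continuous_id)).matrix_det
      refine this.continuousAt.eventually_ne ?_
      simp [hZ1]
    have k2 : ∀ᶠ s' in 𝓝 s, ∀ x ∈ (Set.univ : Set K), (Z s' s x).det ≠ 0 := by
      refine isCompact_univ.eventually_forall_of_forall_eventually fun x _ => ?_
      have : Continuous fun z : I × K => (Z z.1 s z.2).det :=
        (hZ.comp (continuous_fst.prodMk (continuous_const.prodMk continuous_snd))).matrix_det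
      refine this.continuousAt.eventually_ne ?_
      simp [hZ1]
    filter_upwards [k1, k2] with s' h1 h2
    exact ⟨hstep s' s fun x => h2 x trivial, hstep s s' fun x => h1 x trivial⟩
  have hclopen : IsClopen {s | Good s} := by
    constructor
    · rw [← isOpen_compl_iff, isOpen_iff_mem_nhds]
      intro s hs
      filter_upwards [hnear s] with s' h h'
      exact hs (h.2 h')
    · rw [isOpen_iff_mem_nhds]
      intro s hs
      filter_upwards [hnear s] with s' h
      exact h.1 hs
  have h0 : Good 0 := ⟨fun _ => 1, continuous_const, by simp, by simp [hc0]⟩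
  have hall := hclopen.eq_univ ⟨0, h0⟩
  have h1 : Good 1 := by
    have : (1 : I) ∈ {s | Good s} := hall ▸ Set.mem_univ _
    exact this
  simpa only [Good, hc1] using h1

open unitInterval in
/-- A continuous map from a cube to a vector space of higher dimension can be approximated by
a nowhere vanishing one. -/
lemma exists_approx_ne_zero {k : ℕ} {V : Type*} [NormedAddCommGroup V] [NormedSpace ℝ V]
    [FiniteDimensional ℝ V] (hk : k < Module.finrank ℝ V) (sg : (Fin k → I) → V)
    (hsg : Continuous sg) {ε : ℝ} (hε : 0 < ε) :
    ∃ τ : (Fin k → I) → V, Continuous τ ∧ (∀ t, τ t ≠ 0) ∧ ∀ t, ‖τ t - sg t‖ < ε := by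
  let r : (Fin k → ℝ) → (Fin k → I) := fun x j => Set.projIcc 0 1 zero_le_one (x j)
  have hr : UniformContinuous r := by
    rw [uniformContinuous_pi]
    intro j
    exact (LipschitzWith.projIcc _).uniformContinuous.comp (Pi.uniformContinuous_proj _ j)
  have hf : UniformContinuous (sg ∘ r) :=
    (CompactSpace.uniformContinuous_of_continuous hsg).comp hr
  obtain ⟨g, hg, hgd⟩ := hf.exists_contDiff_dist_le (half_pos hε)
  have hd := (hg.of_le (m := 1) (by norm_cast)).dense_compl_range_of_finrank_lt_finrank
    (by simpa using hk)
  obtain ⟨c, hc, hcd⟩ := hd.exists_dist_lt 0 (half_pos hε)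
  refine ⟨fun t => g (fun j => t j) - c, ?_, ?_, ?_⟩
  · have := hg.continuous
    fun_prop
  · intro t h
    exact hc ⟨_, sub_eq_zero.1 h⟩
  · intro t
    have h1 := hgd (fun j => t j)
    have h2 : r (fun j => (t j : ℝ)) = t := by
      funext j
      simp [r]
    simp only [Function.comp, h2, dist_eq_norm] at h1
    rw [dist_eq_norm, zero_sub, norm_neg] at hcd
    calc ‖g (fun j => t j) - c - sg t‖ = ‖(g (fun j => t j) - sg t) - c‖ := by congr 1; abel
      _ ≤ _ := norm_sub_le _ _
      _ < ε := by linarith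

open unitInterval in
lemma exists_good_vector {ι : Type*} [Fintype ι] [DecidableEq ι] {k d : ℕ} (hkd : k < d)
    (P : (Fin k → I) → Matrix ι ι ℝ) (hP : Continuous P)
    (hPP : ∀ x, P x * P x = P x) (htr : ∀ x, (P x).trace = d) (j₀ : ι) :
    ∃ v : (Fin k → I) → ι → ℝ, Continuous v ∧ (∀ x, v x j₀ = 1) ∧ ∀ x, P x *ᵥ v x ≠ 0 := by
  obtain ⟨U, hU, hUd, hPU⟩ := exists_trivialization (fun q : I × (Fin k → I) => fun j => q.1 * q.2 j)
    (by fun_prop) (by simp) 0 (by intro x; funext j; simp) P hP hPP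
  have hUi : Continuous fun x => (U x)⁻¹ := by
    have : (fun x => (U x)⁻¹) = fun x => ((U x).det)⁻¹ • (U x).adjugate := by
      funext x; rw [Matrix.inv_def, Ring.inverse_eq_inv']
    rw [this]
    exact (hU.matrix_det.inv₀ hUd).smul hU.matrix_adjugate
  have hu : ∀ x, IsUnit (U x).det := fun x => (hUd x).isUnit
  let P0 := P 0
  let V := LinearMap.range (Matrix.toLin' P0)
  have hV : Module.finrank ℝ V = d := by
    have hi : IsIdempotentElem (Matrix.toLin' P0) := by
      change _ * _ = _
      rw [Module.End.mul_eq_comp, ← Matrix.toLin'_mul, hPP]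
    have := (LinearMap.IsIdempotentElem.isProj_range _ hi).trace
    rw [Matrix.trace_toLin'_eq, htr] at this
    exact_mod_cast this.symm
  let e : ι → ℝ := Pi.single j₀ 1
  let sg : (Fin k → I) → V := fun x => ⟨P0 *ᵥ ((U x)⁻¹ *ᵥ e), ⟨(U x)⁻¹ *ᵥ e, by simp⟩⟩
  have hsg : Continuous sg := by
    refine Continuous.subtype_mk ?_ _
    exact continuous_const.matrix_mulVec (hUi.matrix_mulVec continuous_const)
  have hev : ∀ᶠ w in 𝓝 (0 : ι → ℝ), ∀ x ∈ (Set.univ : Set (Fin k → I)),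
      |(U x *ᵥ w) j₀| < 1 := by
    refine isCompact_univ.eventually_forall_of_forall_eventually fun x _ => ?_
    have hcont : Continuous fun z : (ι → ℝ) × (Fin k → I) => |(U z.2 *ᵥ z.1) j₀| :=
      ((continuous_apply j₀).comp
        ((hU.comp continuous_snd).matrix_mulVec continuous_fst)).abs
    refine hcont.continuousAt.eventually_lt continuousAt_const ?_
    simp
  obtain ⟨ε, hε, hb⟩ := Metric.eventually_nhds_iff.1 hev
  obtain ⟨τ, hτ, hτ0, hτd⟩ := exists_approx_ne_zero (V := V) (by rw [hV]; exact hkd) sg hsg hε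
  let v : (Fin k → I) → ι → ℝ := fun x => e + U x *ᵥ ((τ x : ι → ℝ) - sg x)
  have hv : Continuous v :=
    continuous_const.add (hU.matrix_mulVec
      ((continuous_subtype_val.comp hτ).sub (continuous_subtype_val.comp hsg)))
  have hvj : ∀ x, v x j₀ ≠ 0 := by
    intro x
    have := @hb ((τ x : ι → ℝ) - sg x) (by
      rw [dist_zero_right]
      exact hτd x) x trivial
    have h1 : v x j₀ = 1 + (U x *ᵥ ((τ x : ι → ℝ) - sg x)) j₀ := by simp [v, e]
    rw [h1]
    have := (abs_lt.1 this).1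
    linarith
  have hfix : ∀ w : V, P0 *ᵥ (w : ι → ℝ) = w := by
    rintro ⟨_, y, rfl⟩
    simp [Matrix.toLin'_apply, Matrix.mulVec_mulVec, P0, hPP]
  have hPv : ∀ x, P x *ᵥ v x = U x *ᵥ (τ x : ι → ℝ) := by
    intro x
    have h1 : P x *ᵥ e = U x *ᵥ (sg x : ι → ℝ) := by
      simp only [sg, Matrix.mulVec_mulVec]
      rw [← mul_assoc, ← hPU, mul_assoc, Matrix.mul_nonsing_inv _ (hu x), mul_one]
    simp only [v]
    rw [Matrix.mulVec_add, h1, Matrix.mulVec_mulVec (M := P x) (N := U x), hPU, ← Matrix.mulVec_mulVec,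
      Matrix.mulVec_sub]
    change _ + U x *ᵥ (P0 *ᵥ _ - P0 *ᵥ _) = _
    rw [hfix, hfix, ← Matrix.mulVec_add]
    congr 1; abel
  refine ⟨fun x => (v x j₀)⁻¹ • v x, ?_, ?_, ?_⟩
  · exact (((continuous_apply j₀).comp hv).inv₀ hvj).smul hv
  · intro x; simp [hvj x]
  · intro x h
    rw [Matrix.mulVec_smul, smul_eq_zero, hPv] at h
    rcases h with h | h
    · exact hvj x (by simpa using h)
    · apply hτ0 x
      have : (U x)⁻¹ *ᵥ (U x *ᵥ (τ x : ι → ℝ)) = 0 := by rw [h]; simp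
      rw [Matrix.mulVec_mulVec, Matrix.nonsing_inv_mul _ (hu x), Matrix.one_mulVec] at this
      exact Subtype.ext this

section Deform
variable {ι : Type*} [Fintype ι] [DecidableEq ι]

/-- Auxiliary Gram-type matrix. -/
def gramAux (Q T : Matrix ι ι ℝ) : Matrix ι ι ℝ := Q * Tᵀ * T * Q + (1 - Q)

/-- Orthogonal projection onto the image under `T` of the range of `Q`. -/
def pushProj (Q T : Matrix ι ι ℝ) : Matrix ι ι ℝ := T * Q * (gramAux Q T)⁻¹ * Q * Tᵀ

lemma gramAux_det_ne_zero {Q T : Matrix ι ι ℝ} (hs : Qᵀ = Q) (hi : Q * Q = Q)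
    (hinj : ∀ x, Q *ᵥ x = x → T *ᵥ x = 0 → x = 0) : (gramAux Q T).det ≠ 0 := by
  intro h
  obtain ⟨x, hx, hMx⟩ := Matrix.exists_mulVec_eq_zero_iff.2 h
  apply hx
  have hi' : (1 - Q) * (1 - Q) = 1 - Q := by
    simp only [mul_sub, sub_mul, hi, mul_one, one_mul]; abel
  have hM : gramAux Q T = (T * Q)ᵀ * (T * Q) + (1 - Q)ᵀ * (1 - Q) := by
    rw [Matrix.transpose_mul, Matrix.transpose_sub, Matrix.transpose_one, hs, hi', gramAux]
    simp only [mul_assoc]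
  have hq : x ⬝ᵥ (gramAux Q T *ᵥ x) =
      ((T * Q) *ᵥ x) ⬝ᵥ ((T * Q) *ᵥ x) + ((1 - Q) *ᵥ x) ⬝ᵥ ((1 - Q) *ᵥ x) := by
    rw [hM, Matrix.add_mulVec, dotProduct_add]
    congr 1
    · rw [← Matrix.mulVec_mulVec, Matrix.dotProduct_mulVec, Matrix.vecMul_transpose]
    · rw [← Matrix.mulVec_mulVec, Matrix.dotProduct_mulVec, Matrix.vecMul_transpose]
  rw [hMx, dotProduct_zero] at hq
  have n1 : 0 ≤ ((T * Q) *ᵥ x) ⬝ᵥ ((T * Q) *ᵥ x) :=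
    Finset.sum_nonneg fun i _ => mul_self_nonneg _
  have n2 : 0 ≤ ((1 - Q) *ᵥ x) ⬝ᵥ ((1 - Q) *ᵥ x) :=
    Finset.sum_nonneg fun i _ => mul_self_nonneg _
  have z1 := dotProduct_self_eq_zero.1 (le_antisymm (by linarith) n1)
  have z2 := dotProduct_self_eq_zero.1 (le_antisymm (by linarith) n2)
  rw [Matrix.sub_mulVec, Matrix.one_mulVec, sub_eq_zero] at z2
  refine hinj x z2.symm ?_
  rwa [← Matrix.mulVec_mulVec, ← z2] at z1

lemma gramAux_key {Q T : Matrix ι ι ℝ} (hi : Q * Q = Q) :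
    Q * Tᵀ * T * Q = gramAux Q T * Q := by
  rw [gramAux, add_mul, sub_mul, one_mul, hi, sub_self, add_zero, mul_assoc (Q * Tᵀ * T), hi]

lemma pushProj_transpose {Q T : Matrix ι ι ℝ} (hs : Qᵀ = Q) : (pushProj Q T)ᵀ = pushProj Q T := by
  have : (gramAux Q T)ᵀ = gramAux Q T := by
    simp [gramAux, Matrix.transpose_mul, hs, mul_assoc]
  simp [pushProj, Matrix.transpose_mul, hs, mul_assoc, Matrix.transpose_nonsing_inv, this]

lemma pushProj_mul_self {Q T : Matrix ι ι ℝ} (hi : Q * Q = Q)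
    (hM : (gramAux Q T).det ≠ 0) : pushProj Q T * pushProj Q T = pushProj Q T := by
  have h1 : pushProj Q T * pushProj Q T =
      T * Q * (gramAux Q T)⁻¹ * (Q * Tᵀ * T * Q) * (gramAux Q T)⁻¹ * Q * Tᵀ := by
    simp only [pushProj, mul_assoc]
  rw [h1, gramAux_key hi, mul_assoc (T * Q), ← mul_assoc _ (gramAux Q T) Q,
    Matrix.nonsing_inv_mul _ hM.isUnit, one_mul, mul_assoc T Q Q, hi, pushProj]

lemma pushProj_trace {Q T : Matrix ι ι ℝ} (hi : Q * Q = Q)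
    (hM : (gramAux Q T).det ≠ 0) : (pushProj Q T).trace = Q.trace := by
  have h1 : pushProj Q T = (T * Q) * ((gramAux Q T)⁻¹ * Q * Tᵀ) := by
    simp only [pushProj, mul_assoc]
  have h2 : (gramAux Q T)⁻¹ * Q * Tᵀ * (T * Q) = (gramAux Q T)⁻¹ * (Q * Tᵀ * T * Q) := by
    simp only [mul_assoc]
  rw [h1, Matrix.trace_mul_comm, h2, gramAux_key hi, ← mul_assoc,
    Matrix.nonsing_inv_mul _ hM.isUnit, one_mul]

lemma pushProj_of_fix {Q T : Matrix ι ι ℝ} (hs : Qᵀ = Q) (hi : Q * Q = Q) (h : T * Q = Q) :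
    pushProj Q T = Q := by
  have ht : Q * Tᵀ = Q := by
    have := congrArg Matrix.transpose h
    rwa [Matrix.transpose_mul, hs] at this
  have hg : gramAux Q T = 1 := by rw [gramAux, ht, mul_assoc, h, hi]; abel
  rw [pushProj, hg, mul_assoc, ht, h, inv_one, mul_one, hi]

lemma pushProj_continuous {K : Type*} [TopologicalSpace K] {Q T : K → Matrix ι ι ℝ}
    (hQ : Continuous Q) (hT : Continuous T) (hM : ∀ x, (gramAux (Q x) (T x)).det ≠ 0) :
    Continuous fun x => pushProj (Q x) (T x) := by
  have hg : Continuous fun x => gramAux (Q x) (T x) := by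
    have := hT.matrix_transpose
    unfold gramAux
    fun_prop
  have hUi : Continuous fun x => (gramAux (Q x) (T x))⁻¹ := by
    have : (fun x => (gramAux (Q x) (T x))⁻¹) =
        fun x => ((gramAux (Q x) (T x)).det)⁻¹ • (gramAux (Q x) (T x)).adjugate := by
      funext x; rw [Matrix.inv_def, Ring.inverse_eq_inv']
    rw [this]
    exact (hg.matrix_det.inv₀ hM).smul hg.matrix_adjugate
  exact (((hT.mul hQ).mul hUi).mul hQ).mul hT.matrix_transpose

end Deform

/-- The index of the last coordinate. -/
def lastIdx (n ℓ : ℕ) : Fin (n + 1 + ℓ) := grassmannReindex n ℓ (Sum.inr 0)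

/-- The last unit vector. -/
def lastVec (n ℓ : ℕ) : Fin (n + 1 + ℓ) → ℝ := Pi.single (lastIdx n ℓ) 1

open unitInterval in
/-- Compression lemma. -/
lemma compression (n ℓ k : ℕ) (hk : k ≤ n) (F : C((Fin k → I), MatGrassmannian (n + 1) ℓ)) :
    ∃ H : C(I × (Fin k → I), MatGrassmannian (n + 1) ℓ), (∀ x, H (0, x) = F x) ∧
      (∀ x, (H (1, x)).1 *ᵥ lastVec n ℓ = lastVec n ℓ) ∧
      ∀ r x, (F x).1 *ᵥ lastVec n ℓ = lastVec n ℓ → H (r, x) = F x := by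
  have hFc : Continuous fun x => (F x).1 := continuous_subtype_val.comp F.continuous
  obtain ⟨v, hv, hv1, hPv⟩ := exists_good_vector (d := n + 1) (by omega) (fun x => (F x).1) hFc
    (fun x => (F x).2.2.1) (fun x => (F x).2.2.2) (lastIdx n ℓ)
  let e := lastVec n ℓ
  have hev : ∀ x, e ⬝ᵥ v x = 1 := by intro x; simp [e, lastVec, hv1]
  let Q : I × (Fin k → I) → Matrix (Fin (n + 1 + ℓ)) (Fin (n + 1 + ℓ)) ℝ := fun q => 1 - (F q.2).1
  let T : I × (Fin k → I) → Matrix (Fin (n + 1 + ℓ)) (Fin (n + 1 + ℓ)) ℝ := fun q =>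
    1 - (q.1 : ℝ) • Matrix.vecMulVec (v q.2) e
  have hQ : Continuous Q := continuous_const.sub (hFc.comp continuous_snd)
  have hT : Continuous T := by
    refine continuous_const.sub ((continuous_subtype_val.comp continuous_fst).smul ?_)
    exact (hv.comp continuous_snd).matrix_vecMulVec continuous_const
  have hQs : ∀ q, (Q q)ᵀ = Q q := by intro q; simp [Q, (F q.2).2.1]
  have hQi : ∀ q, Q q * Q q = Q q := by
    intro q; simp only [Q, mul_sub, sub_mul, (F q.2).2.2.1, mul_one, one_mul]; abel
  have hTx : ∀ q x, T q *ᵥ x = x - ((q.1 : ℝ) * (e ⬝ᵥ x)) • v q.2 := by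
    intro q x
    simp only [T, Matrix.sub_mulVec, Matrix.one_mulVec, Matrix.smul_mulVec,
      Matrix.vecMulVec_mulVec, mul_smul]
    congr 2
    ext i; simp [mul_comm]
  have hM : ∀ q, (gramAux (Q q) (T q)).det ≠ 0 := by
    intro q
    refine gramAux_det_ne_zero (hQs q) (hQi q) ?_
    intro x h1 h2
    have h3 : (F q.2).1 *ᵥ x = 0 := by
      simpa [Q, Matrix.sub_mulVec] using h1
    rw [hTx, sub_eq_zero] at h2
    rw [h2, Matrix.mulVec_smul, smul_eq_zero] at h3
    rcases h3 with h3 | h3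
    · rw [h2, h3, zero_smul]
    · exact absurd h3 (hPv _)
  have htrQ : ∀ q, (Q q).trace = ℓ := by
    intro q
    simp only [Q, Matrix.trace_sub, Matrix.trace_one, (F q.2).2.2.2, Fintype.card_fin]
    push_cast; ring
  have hfix : ∀ q, T q * Q q = Q q → 1 - pushProj (Q q) (T q) = (F q.2).1 := by
    intro q h
    rw [pushProj_of_fix (hQs q) (hQi q) h]
    simp [Q]
  refine ⟨⟨fun q => ⟨1 - pushProj (Q q) (T q), ?_, ?_, ?_⟩, ?_⟩, ?_, ?_, ?_⟩
  · simp [pushProj_transpose (hQs q)]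
  · simp only [mul_sub, sub_mul, pushProj_mul_self (hQi q) (hM q), mul_one, one_mul]; abel
  · rw [Matrix.trace_sub, pushProj_trace (hQi q) (hM q), htrQ, Matrix.trace_one, Fintype.card_fin]
    push_cast; ring
  · exact Continuous.subtype_mk (continuous_const.sub (pushProj_continuous hQ hT hM)) _
  · intro x
    apply Subtype.ext
    exact hfix (0, x) (by simp [T])
  · intro x
    have hTt : (T (1, x))ᵀ *ᵥ e = 0 := by
      have hee : v x ⬝ᵥ e = 1 := by rw [dotProduct_comm, hev]
      simp [T, Matrix.sub_mulVec, Matrix.transpose_vecMulVec, Matrix.vecMulVec_mulVec, hee]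
    change (1 - pushProj (Q (1, x)) (T (1, x))) *ᵥ e = e
    rw [Matrix.sub_mulVec, Matrix.one_mulVec, pushProj, ← Matrix.mulVec_mulVec, hTt,
      Matrix.mulVec_zero, sub_zero]
  · intro r x h
    apply Subtype.ext
    refine hfix (r, x) ?_
    have h1 : Q (r, x) *ᵥ e = 0 := by
      simp only [Q, Matrix.sub_mulVec, Matrix.one_mulVec]
      exact sub_eq_zero.2 h.symm
    have h2 : e ᵥ* Q (r, x) = 0 := by
      rw [← hQs, Matrix.vecMul_transpose, h1]
    simp only [T, sub_mul, one_mul, Matrix.smul_mul, Matrix.vecMulVec_mul, h2]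
    simp

lemma inclusion_val (n ℓ : ℕ) (P : MatGrassmannian n ℓ) :
    (grassmannInclusion n ℓ P).1 =
      (Matrix.fromBlocks P.1 0 0 (1 : Matrix (Fin 1) (Fin 1) ℝ)).submatrix
        (grassmannReindex n ℓ).symm (grassmannReindex n ℓ).symm := rfl

lemma inclusion_apply_lastVec (n ℓ : ℕ) (P : MatGrassmannian n ℓ) :
    (grassmannInclusion n ℓ P).1 *ᵥ lastVec n ℓ = lastVec n ℓ := by
  ext i
  obtain ⟨j, rfl⟩ := (grassmannReindex n ℓ).surjective i
  simp only [lastVec, lastIdx, Matrix.mulVec_single_one, inclusion_val]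
  rcases j with j | j
  · simp [Pi.single_apply]
  · fin_cases j
    simp

/-- The upper left block of a projection fixing the last vector. -/
def deflate (n ℓ : ℕ) (P : MatGrassmannian (n + 1) ℓ)
    (h : P.1 *ᵥ lastVec n ℓ = lastVec n ℓ) : {R : MatGrassmannian n ℓ //
      R.1 = P.1.submatrix (grassmannReindex n ℓ ∘ Sum.inl) (grassmannReindex n ℓ ∘ Sum.inl) ∧
      grassmannInclusion n ℓ R = P} := by
  set g := grassmannReindex n ℓ with hg
  set A := P.1.submatrix (g ∘ Sum.inl) (g ∘ Sum.inl) with hA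
  have hcol : ∀ i, P.1 i (lastIdx n ℓ) = (lastVec n ℓ) i := by
    intro i
    have := congrFun h i
    rw [← this]
    conv_rhs => rw [lastVec, Matrix.mulVec_single_one]
    rfl
  have hrow : ∀ i, P.1 (lastIdx n ℓ) i = (lastVec n ℓ) i := by
    intro i
    rw [← hcol, ← Matrix.transpose_apply P.1, P.2.1]
  have hblock : P.1.submatrix g g = Matrix.fromBlocks A 0 0 (1 : Matrix (Fin 1) (Fin 1) ℝ) := by
    ext i j
    rcases i with i | i <;> rcases j with j | j
    · rfl
    · fin_cases j
      have := hcol (g (Sum.inl i))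
      simpa [lastVec, lastIdx, hg, Pi.single_apply] using this
    · fin_cases i
      have := hrow (g (Sum.inl j))
      simpa [lastVec, lastIdx, hg, Pi.single_apply] using this
    · fin_cases i; fin_cases j
      have := hcol (g (Sum.inr 0))
      simpa [lastVec, lastIdx, hg, Pi.single_apply] using this
  have hAA : A * A = A := by
    have h1 : P.1.submatrix g g * P.1.submatrix g g = P.1.submatrix g g := by
      rw [Matrix.submatrix_mul_equiv, P.2.2.1]
    rw [hblock, Matrix.fromBlocks_multiply] at h1
    have := congrArg Matrix.toBlocks₁₁ h1
    simpa using this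
  have htr : A.trace = n := by
    have h1 : (P.1.submatrix g g).trace = (n + 1 : ℕ) := by
      rw [trace_submatrix_equiv', P.2.2.2]
    rw [hblock] at h1
    simpa [Matrix.trace, Fintype.sum_sum_type] using h1
  have hAt : Aᵀ = A := by rw [hA, Matrix.transpose_submatrix, P.2.1]
  refine ⟨⟨A, hAt, hAA, htr⟩, rfl, ?_⟩
  apply Subtype.ext
  change (Matrix.fromBlocks A 0 0 (1 : Matrix (Fin 1) (Fin 1) ℝ)).submatrix g.symm g.symm = P.1
  rw [← hblock]
  simp

lemma inclusion_injective (n ℓ : ℕ) : Function.Injective (grassmannInclusion n ℓ) := by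
  intro P R h
  apply Subtype.ext
  have h1 := congrArg Subtype.val h
  ext i j
  have := congrFun (congrFun h1 (grassmannReindex n ℓ (Sum.inl i)))
    (grassmannReindex n ℓ (Sum.inl j))
  rw [inclusion_val, inclusion_val] at this
  simpa using this

lemma exists_lift {n ℓ : ℕ} {K : Type*} [TopologicalSpace K] (F : C(K, MatGrassmannian (n + 1) ℓ))
    (h : ∀ x, (F x).1 *ᵥ lastVec n ℓ = lastVec n ℓ) :
    ∃ G : C(K, MatGrassmannian n ℓ), ∀ x, grassmannInclusion n ℓ (G x) = F x := by
  refine ⟨⟨fun x => (deflate n ℓ (F x) (h x)).1, ?_⟩, fun x => (deflate n ℓ (F x) (h x)).2.2⟩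
  refine continuous_induced_rng.2 ?_
  have hcont : Continuous fun x => (F x).1.submatrix (grassmannReindex n ℓ ∘ Sum.inl)
        (grassmannReindex n ℓ ∘ Sum.inl) :=
    (continuous_subtype_val.comp F.continuous).matrix_submatrix _ _
  exact hcont.congr fun x => (deflate n ℓ (F x) (h x)).2.1.symm

open unitInterval in
lemma induced_surjective (n ℓ k : ℕ) (hk : k ≤ n) (a : MatGrassmannian n ℓ) :
    Function.Surjective (HomotopyGroup.induced (Fin k) (grassmannInclusion n ℓ) a) := by
  intro q
  induction q using Quotient.inductionOn with | _ f
  obtain ⟨H, H0, H1, Hfix⟩ := compression n ℓ k hk f.1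
  have hf : ∀ y ∈ Cube.boundary (Fin k), f.1 y = grassmannInclusion n ℓ a := f.2
  have hb : ∀ r, ∀ y ∈ Cube.boundary (Fin k), H (r, y) = f.1 y := by
    intro r y hy
    refine Hfix r y ?_
    rw [hf y hy, inclusion_apply_lastVec]
  obtain ⟨G, hG⟩ := exists_lift (H.comp ⟨fun x => (1, x), by fun_prop⟩) H1
  let g : GenLoop (Fin k) (MatGrassmannian n ℓ) a := ⟨G, by
    intro y hy
    apply inclusion_injective n ℓ
    rw [hG, ← hf y hy]
    exact hb 1 y hy⟩
  refine ⟨Quotient.mk _ g, ?_⟩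
  refine Quotient.sound (GenLoop.Homotopic.symm ?_)
  refine ⟨⟨⟨H, H0, ?_⟩, ?_⟩⟩
  · intro x
    exact (hG x).symm
  · intro r y hy
    exact hb r y hy

open unitInterval in
lemma induced_injective (n ℓ k : ℕ) (hk : k < n) (a : MatGrassmannian n ℓ) :
    Function.Injective (HomotopyGroup.induced (Fin k) (grassmannInclusion n ℓ) a) := by
  intro p q hpq
  induction p using Quotient.inductionOn with | _ f
  induction q using Quotient.inductionOn with | _ g
  obtain ⟨h⟩ : GenLoop.Homotopic (GenLoop.induced (grassmannInclusion n ℓ) f)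
    (GenLoop.induced (grassmannInclusion n ℓ) g) := Quotient.exact hpq
  let c1 : C((Fin (k + 1) → I), I × (Fin k → I)) := ⟨fun x => (x 0, fun j => x j.succ), by fun_prop⟩
  let c2 : C(I × (Fin k → I), (Fin (k + 1) → I)) := ⟨fun q => Fin.cons q.1 q.2, by fun_prop⟩
  have hc : ∀ q, c1 (c2 q) = q := by intro q; rfl
  obtain ⟨H, H0, H1, Hfix⟩ := compression n ℓ (k + 1) hk (h.toHomotopy.toContinuousMap.comp c1)
  obtain ⟨G, hG⟩ := exists_lift (H.comp ⟨fun q : I × (Fin k → I) => (1, c2 q), by fun_prop⟩)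
    (fun q => H1 _)
  have key : ∀ (q : I × (Fin k → I)) (P : MatGrassmannian n ℓ),
      h q = grassmannInclusion n ℓ P → G q = P := by
    intro q P hP
    apply inclusion_injective n ℓ
    rw [hG, ← hP]
    have := Hfix 1 (c2 q) (by
      change (h (c1 (c2 q))).1 *ᵥ _ = _
      rw [hc, hP, inclusion_apply_lastVec])
    exact this
  refine Quotient.sound ?_
  refine ⟨⟨⟨G, ?_, ?_⟩, ?_⟩⟩
  · intro x
    exact key _ _ (h.apply_zero x)
  · intro x
    exact key _ _ (h.apply_one x)
  · intro r y hy
    exact key _ _ (h.eq_fst r hy)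

/-- The stabilization map `i^G : G_{n,ℓ} → G_{n+1,ℓ}` induces an
isomorphism on `π_i` for `0 ≤ i < n` and an epimorphism for `i = n`. -/
theorem grassmann_inclusion_isIso_pi_lt_and_surj_pi_eq (n ℓ : ℕ) (a : MatGrassmannian n ℓ) :
    (∀ i : ℕ, i < n →
      Function.Bijective (HomotopyGroup.induced (Fin i) (grassmannInclusion n ℓ) a)) ∧
    Function.Surjective (HomotopyGroup.induced (Fin n) (grassmannInclusion n ℓ) a) :=
  ⟨fun i hi => ⟨induced_injective n ℓ i hi a, induced_surjective n ℓ i hi.le a⟩,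
    induced_surjective n ℓ n le_rfl a⟩
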